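/- arXiv:2507.22658 — 2 statements merged into one kernel-verified Lean document; each statement's English description precedes it below -/
import Mathlib

section
/- For every distortion function η there exists a distortion function η̃ depending only on η (one may take η̃(t) = η₂(η(η₁⁻¹(2t))) with η₁(t) = (1/3)·min{t,√t} and η₂(t) = 3·max{t,√t}) such that the following holds: for every η-quasi-Möbius homeomorphism f : X → Y between metric spaces and every pair of disjoint nondegenerate continua E, F ⊆ X, one has Δ(f(E), f(F)) ≤ η̃(Δ(E, F)). -/
open Metric Set

universe u v

/-- A distortion function: a homeomorphism of `[0,∞)` onto itself. -/
def IsDistortionFunction (η : ℝ → ℝ) : Prop :=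
  η 0 = 0 ∧ StrictMonoOn η (Ici 0) ∧ ContinuousOn η (Ici 0) ∧ SurjOn η (Ici 0) (Ici 0)

/-- The metric cross ratio `[a,b,c,d] = (d(a,c)·d(b,d))/(d(a,d)·d(b,c))`. -/
noncomputable def crossRatio {X : Type*} [MetricSpace X] (a b c d : X) : ℝ :=
  (dist a c * dist b d) / (dist a d * dist b c)

/-- The distance between two sets: `dist(E,F) = inf { d(x,y) : x ∈ E, y ∈ F }`. -/
noncomputable def setDist {X : Type*} [MetricSpace X] (E F : Set X) : ℝ :=
  sInf (Set.image2 dist E F)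

/-- The relative distance `Δ(E,F) = dist(E,F) / min{diam E, diam F}`. -/
noncomputable def relDist {X : Type*} [MetricSpace X] (E F : Set X) : ℝ :=
  setDist E F / min (diam E) (diam F)

theorem IsDistortionFunction.comp' {f g : ℝ → ℝ} (hf : IsDistortionFunction f)
    (hg : IsDistortionFunction g) : IsDistortionFunction (fun t => f (g t)) := by
  obtain ⟨f0, fm, fc, fs⟩ := hf
  obtain ⟨g0, gm, gc, gs⟩ := hg
  have hmaps : MapsTo g (Ici 0) (Ici 0) := by
    intro x hx
    have := gm.monotoneOn (mem_Ici.2 le_rfl) hx hx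
    rw [g0] at this
    exact this
  refine ⟨by simp [f0, g0], fm.comp gm hmaps, fc.comp gc hmaps, ?_⟩
  exact fs.comp gs

theorem isDistortion_of_le {g : ℝ → ℝ} (h0 : g 0 = 0) (hm : StrictMonoOn g (Ici 0))
    (hc : Continuous g) (hle : ∀ t, 0 ≤ t → t ≤ g t) : IsDistortionFunction g := by
  refine ⟨h0, hm, hc.continuousOn, ?_⟩
  intro y hy
  have := intermediate_value_Icc (mem_Ici.1 hy) hc.continuousOn (f := g)
  obtain ⟨x, hx, rfl⟩ := this ⟨by rw [h0]; exact hy, hle y hy⟩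
  exact ⟨x, hx.1, rfl⟩

theorem isDistortion_inner : IsDistortionFunction (fun t => 4 * t * (1 + t)) := by
  apply isDistortion_of_le
  · simp
  · intro x hx y hy hxy
    simp only [mem_Ici] at hx hy
    show 4 * x * (1 + x) < 4 * y * (1 + y)
    nlinarith
  · fun_prop
  · intro t ht
    nlinarith

theorem isDistortion_outer : IsDistortionFunction (fun t => 4 * t + Real.sqrt (2 * t)) := by
  apply isDistortion_of_le
  · simp
  · intro x hx y hy hxy
    have := Real.sqrt_le_sqrt (show 2 * x ≤ 2 * y by linarith)
    show 4 * x + Real.sqrt (2 * x) < 4 * y + Real.sqrt (2 * y)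
    linarith
  · fun_prop
  · intro t ht
    have := Real.sqrt_nonneg (2 * t)
    linarith

theorem outer_bound {p q x y δ R : ℝ} (hp : 0 < p) (hpq : p ≤ q) (hδ : 0 ≤ δ)
    (hx : δ ≤ x) (hy : δ ≤ y) (hq : q ≤ x + p + y) (hR : 0 ≤ R) (h : x * y ≤ R * (p * q)) :
    δ ≤ (4 * R + Real.sqrt (2 * R)) * p := by
  have hs := Real.sqrt_nonneg (2 * R)
  have hs2 := Real.mul_self_sqrt (show 0 ≤ 2 * R by linarith)
  have hRp := mul_nonneg hR hp.le
  have hsp := mul_nonneg hs hp.le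
  rcases le_total (2 * p) q with h2 | h2
  · have hq0 : 0 < q := by linarith
    -- one of the two distances is at least `q / 4`
    have key : δ * (q / 4) ≤ x * y := by
      rcases le_total x y with hxy | hxy
      · exact mul_le_mul hx (by linarith) (by linarith) (by linarith)
      · rw [mul_comm x y]
        exact mul_le_mul hy (by linarith) (by linarith) (by linarith)
    have : δ * q ≤ (4 * R * p) * q := by nlinarith
    have := le_of_mul_le_mul_right this hq0
    nlinarith
  · have h1 : δ * δ ≤ x * y := mul_le_mul hx hy hδ (by linarith)
    have h3 : R * (p * q) ≤ R * (p * (2 * p)) := by gcongr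
    have h4 : δ * δ ≤ (Real.sqrt (2 * R) * p) * (Real.sqrt (2 * R) * p) := by
      calc δ * δ ≤ R * (p * (2 * p)) := by linarith
        _ = (2 * R) * (p * p) := by ring
        _ = _ := by linear_combination (-(p * p)) * hs2
    have := abs_le_of_sq_le_sq (by nlinarith : δ ^ 2 ≤ (Real.sqrt (2 * R) * p) ^ 2) hsp
    have := le_abs_self δ
    nlinarith

theorem inner_bound {s D δ t m z : ℝ} (hs : 0 < s) (hsD : s ≤ D) (hδ : 0 ≤ δ)
    (hm : 0 < m) (hms : m ≤ 2 * s) (ht : δ ≤ t * m) (ht0 : 0 ≤ t) (hz : z ≤ s + δ + D) :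
    δ * z ≤ 4 * t * (1 + t) * (s * D) := by
  have h1 : δ ≤ 2 * t * s := by nlinarith
  have h2 : z ≤ 2 * (1 + t) * D := by nlinarith
  have hD : 0 < D := by linarith
  calc δ * z ≤ δ * (2 * (1 + t) * D) := by gcongr
    _ ≤ (2 * t * s) * (2 * (1 + t) * D) := by gcongr
    _ = _ := by ring

theorem exists_far {X : Type*} [MetricSpace X] {E : Set X} (hE : IsCompact E)
    (hn : E.Nontrivial) (a : X) (ha : a ∈ E) : ∃ b ∈ E, a ≠ b ∧ diam E ≤ 2 * dist a b := by
  obtain ⟨b, hb, hmax⟩ := hE.exists_isMaxOn ⟨a, ha⟩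
    (f := fun x => dist a x) (by fun_prop)
  have hmax' : ∀ x ∈ E, dist a x ≤ dist a b := fun x hx => hmax hx
  refine ⟨b, hb, ?_, ?_⟩
  · obtain ⟨x, hx, hxa⟩ := hn.exists_ne a
    have := hmax' x hx
    have h2 := dist_pos.2 hxa.symm
    exact dist_pos.1 (by linarith)
  · apply diam_le_of_subset_closedBall dist_nonneg (x := a)
    intro x hx
    rw [mem_closedBall, dist_comm]
    exact hmax' x hx

theorem diam_pos_of_far {X : Type*} [MetricSpace X] {E : Set X} (hE : IsCompact E)
    (hn : E.Nontrivial) : 0 < diam E := by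
  obtain ⟨x, hx, y, hy, hxy⟩ := hn
  exact (dist_pos.2 hxy).trans_le (dist_le_diam_of_mem hE.isBounded hx hy)

theorem setDist_le {X : Type*} [MetricSpace X] {E F : Set X} {x y : X} (hx : x ∈ E)
    (hy : y ∈ F) : setDist E F ≤ dist x y := by
  refine csInf_le ⟨0, ?_⟩ (mem_image2_of_mem hx hy)
  rintro _ ⟨a, _, b, _, rfl⟩
  exact dist_nonneg

theorem setDist_nonneg {X : Type*} [MetricSpace X] (E F : Set X) : 0 ≤ setDist E F := by
  apply Real.sInf_nonneg
  rintro _ ⟨a, _, b, _, rfl⟩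
  exact dist_nonneg

theorem exists_setDist {X : Type*} [MetricSpace X] {E F : Set X} (hE : IsCompact E)
    (hF : IsCompact F) (hEn : E.Nonempty) (hFn : F.Nonempty) :
    ∃ a ∈ E, ∃ c ∈ F, dist a c = setDist E F := by
  obtain ⟨⟨a, c⟩, hac, hmin⟩ := (hE.prod hF).exists_isMinOn (hEn.prod hFn)
    (f := fun z : X × X => dist z.1 z.2) (by fun_prop)
  refine ⟨a, hac.1, c, hac.2, le_antisymm ?_ (setDist_le hac.1 hac.2)⟩
  apply le_csInf (hEn.image2 hFn)
  rintro _ ⟨x, hx, y, hy, rfl⟩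
  exact hmin (show (x, y) ∈ E ×ˢ F from ⟨hx, hy⟩)

/-- For every distortion function `η` there exists a distortion function `η'`
(depending only on `η`) such that for every `η`-quasi-Möbius homeomorphism
`f : X → Y` between metric spaces and every pair of disjoint nondegenerate
continua `E, F ⊆ X` we have `Δ(f(E), f(F)) ≤ η'(Δ(E,F))`. -/
theorem stmt0 (η : ℝ → ℝ) (hη : IsDistortionFunction η) :
    ∃ η' : ℝ → ℝ, IsDistortionFunction η' ∧
      ∀ (X : Type u) (Y : Type v) [MetricSpace X] [MetricSpace Y] (f : X ≃ₜ Y),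
        (∀ a b c d : X, a ≠ b → a ≠ c → a ≠ d → b ≠ c → b ≠ d → c ≠ d →
          crossRatio (f a) (f b) (f c) (f d) ≤ η (crossRatio a b c d)) →
        ∀ E F : Set X,
          IsCompact E → IsConnected E → E.Nontrivial →
          IsCompact F → IsConnected F → F.Nontrivial →
          Disjoint E F →
          relDist (f '' E) (f '' F) ≤ η' (relDist E F) := by
  refine ⟨fun t => (fun r => 4 * r + Real.sqrt (2 * r)) ((fun t => η (4 * t * (1 + t))) t),
    isDistortion_outer.comp' (hη.comp' isDistortion_inner), ?_⟩
  intro X Y _ _ f hf E F hE _ hEn hF _ hFn hEF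
  obtain ⟨a, ha, c, hc, hac⟩ := exists_setDist hE hF hEn.nonempty hFn.nonempty
  obtain ⟨b, hb, hab, hdE⟩ := exists_far hE hEn a ha
  obtain ⟨d, hd, hcd, hdF⟩ := exists_far hF hFn c hc
  have hne : ∀ x ∈ E, ∀ y ∈ F, x ≠ y := fun x hx y hy => hEF.ne_of_mem hx hy
  have hm : 0 < min (diam E) (diam F) :=
    lt_min (diam_pos_of_far hE hEn) (diam_pos_of_far hF hFn)
  set t := relDist E F with htdef
  have ht0 : 0 ≤ t := div_nonneg (setDist_nonneg _ _) hm.le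
  have htm : dist a c = t * min (diam E) (diam F) := by
    rw [hac, htdef, relDist, div_mul_cancel₀ _ hm.ne']
  have hab0 := dist_pos.2 hab
  have hcd0 := dist_pos.2 hcd
  -- the cross ratio in the source
  have hsrc : crossRatio a d c b ≤ 4 * t * (1 + t) := by
    rw [crossRatio, div_le_iff₀ (by rw [dist_comm d c]; positivity), dist_comm d c]
    have htri : dist d b ≤ dist a b + dist a c + dist c d := by
      have h1 := dist_triangle4 d c a b
      rw [dist_comm d c, dist_comm c a] at h1
      linarith
    rcases le_total (dist a b) (dist c d) with h | h
    · exact inner_bound hab0 h dist_nonneg hm ((min_le_left _ _).trans hdE) htm.le ht0 htri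
    · rw [mul_comm (dist a b)]
      exact inner_bound hcd0 h dist_nonneg hm ((min_le_right _ _).trans hdF) htm.le ht0
        (by linarith)
  have hsrc0 : 0 ≤ crossRatio a d c b := by unfold crossRatio; positivity
  have htgt := hf a d c b (hne a ha d hd) (hne a ha c hc) hab hcd.symm (hne b hb d hd).symm
    (hne b hb c hc).symm
  have hR := htgt.trans (hη.2.1.monotoneOn (mem_Ici.2 hsrc0)
    (mem_Ici.2 (hsrc0.trans hsrc)) hsrc)
  show relDist (f '' E) (f '' F) ≤
    4 * η (4 * t * (1 + t)) + Real.sqrt (2 * η (4 * t * (1 + t)))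
  set R := η (4 * t * (1 + t))
  have hR0 : 0 ≤ R := le_trans (by unfold crossRatio; positivity) hR
  have hp : 0 < dist (f a) (f b) := dist_pos.2 (f.injective.ne hab)
  have hq : 0 < dist (f c) (f d) := dist_pos.2 (f.injective.ne hcd)
  rw [crossRatio, dist_comm (f d) (f c), div_le_iff₀ (by positivity)] at hR
  have hx : setDist (f '' E) (f '' F) ≤ dist (f a) (f c) :=
    setDist_le (mem_image_of_mem f ha) (mem_image_of_mem f hc)
  have hy : setDist (f '' E) (f '' F) ≤ dist (f d) (f b) := by
    rw [dist_comm]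
    exact setDist_le (mem_image_of_mem f hb) (mem_image_of_mem f hd)
  have hpE : dist (f a) (f b) ≤ diam (f '' E) :=
    dist_le_diam_of_mem (hE.image f.continuous).isBounded (mem_image_of_mem f ha)
      (mem_image_of_mem f hb)
  have hqF : dist (f c) (f d) ≤ diam (f '' F) :=
    dist_le_diam_of_mem (hF.image f.continuous).isBounded (mem_image_of_mem f hc)
      (mem_image_of_mem f hd)
  have hδ := setDist_nonneg (f '' E) (f '' F)
  have hC : 0 ≤ 4 * R + Real.sqrt (2 * R) := by positivity
  have hmin : min (dist (f a) (f b)) (dist (f c) (f d)) ≤ min (diam (f '' E)) (diam (f '' F)) :=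
    min_le_min hpE hqF
  rw [relDist, div_le_iff₀ ((lt_min hp hq).trans_le hmin)]
  refine le_trans ?_ (mul_le_mul_of_nonneg_left hmin hC)
  rcases le_total (dist (f a) (f b)) (dist (f c) (f d)) with h | h
  · rw [min_eq_left h]
    refine outer_bound hp h hδ hx hy ?_ hR0 hR
    have h1 := dist_triangle4 (f c) (f a) (f b) (f d)
    rw [dist_comm (f c) (f a), dist_comm (f b) (f d)] at h1
    exact h1
  · rw [min_eq_right h]
    refine outer_bound hq h hδ hx hy ?_ hR0 (by rw [mul_comm (dist (f c) (f d))]; exact hR)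
    have h1 := dist_triangle4 (f a) (f c) (f d) (f b)
    exact h1
end

section
/- Let (X,d) be a metric space and let {K_i}_{i∈I} be a collection of nonempty compact connected subsets of X. For every annulus A = A(x;r,R) in X there exists a concentric subannulus A' = A(x;r',R') of A with width w_{A'} ≥ min{w_A, w_A^{1/9}} such that one of the following two alternatives holds: (i) there is at most one index i₀ ∈ I such that for every i ∈ I with i ≠ i₀ one has w_{A'}(K_i) ≤ w_{A'}^{1/3} (i.e., the bound w_{A'}(K_i) ≤ w_{A'}^{1/3} holds for all i ∈ I with at most one exception); or (ii) there exist distinct indices i₁, i₂ ∈ I such that each of K_{i₁} and K_{i₂} intersects both boundary spheres {y : d(x,y) = r'} and {y : d(x,y) = R'} of A'. -/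
open Metric Set

/-- The width `w_A(K)` of a set `K` relative to the annulus
`A = A(x;r,R) = {y : r ≤ d(x,y) ≤ R}`, namely `log(R_A(K)/r_A(K))` where
`R_A(K) = sup {d(x,y) : y ∈ A ∩ K}` and `r_A(K) = inf {d(x,y) : y ∈ A ∩ K}`.
(If `A ∩ K = ∅`, then `sSup ∅ = sInf ∅ = 0` in `ℝ` and `log (0/0) = 0`, so the
value is `0`, in accordance with the convention `w_A(K) = 0` in that case.) -/
noncomputable def relWidth {X : Type*} [MetricSpace X] (x : X) (r R : ℝ) (K : Set X) : ℝ :=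
  Real.log
    (sSup ((fun y => dist x y) '' {y ∈ K | r ≤ dist x y ∧ dist x y ≤ R}) /
     sInf ((fun y => dist x y) '' {y ∈ K | r ≤ dist x y ∧ dist x y ≤ R}))

theorem relWidth_attained {X : Type*} [MetricSpace X] (x : X) (r R : ℝ) (hr : 0 < r)
    (K : Set X) (hK : IsCompact K) (hpos : 0 < relWidth x r R K) :
    ∃ y ∈ K, ∃ z ∈ K, r ≤ dist x y ∧ dist x y < dist x z ∧ dist x z ≤ R ∧
      relWidth x r R K = Real.log (dist x z / dist x y) := by
  set S : Set X := {y ∈ K | r ≤ dist x y ∧ dist x y ≤ R} with hS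
  have hSc : IsCompact S := by
    have : S = K ∩ {y | r ≤ dist x y ∧ dist x y ≤ R} := rfl
    rw [this]
    apply hK.inter_right
    apply IsClosed.and
    · exact isClosed_le continuous_const (by fun_prop)
    · exact isClosed_le (by fun_prop) continuous_const
  have hne : S.Nonempty := by
    rw [Set.nonempty_iff_ne_empty]
    intro h
    have h0 : relWidth x r R K = 0 := by
      unfold relWidth
      rw [← hS, h]
      simp
    linarith
  have him : IsCompact ((fun y => dist x y) '' S) := hSc.image (by fun_prop)
  obtain ⟨z, hz, hz'⟩ := him.sSup_mem (hne.image _)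
  obtain ⟨y, hy, hy'⟩ := him.sInf_mem (hne.image _)
  have heq : relWidth x r R K = Real.log (dist x z / dist x y) := by
    unfold relWidth
    rw [← hS, ← hz', ← hy']
  refine ⟨y, hy.1, z, hz.1, hy.2.1, ?_, hz.2.2, heq⟩
  by_contra hcon
  push Not at hcon
  have hy0 : 0 < dist x y := lt_of_lt_of_le hr hy.2.1
  have := Real.log_nonpos (div_nonneg dist_nonneg hy0.le) ((div_le_one hy0).2 hcon)
  linarith

theorem meets_sphere {X : Type*} [MetricSpace X] (x : X) (K : Set X) (hK : IsConnected K)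
    {y z : X} (hy : y ∈ K) (hz : z ∈ K) {t : ℝ} (h1 : dist x y ≤ t) (h2 : t ≤ dist x z) :
    (K ∩ sphere x t).Nonempty := by
  obtain ⟨w, hw, hw'⟩ := hK.isPreconnected.intermediate_value hy hz
    (f := fun y => dist x y) (by fun_prop) ⟨h1, h2⟩
  exact ⟨w, hw, by rw [mem_sphere, dist_comm]; exact hw'⟩

/-- Given a collection of nonempty compact connected sets `K i` in a metric space
and an annulus `A = A(x;r,R)`, there is a concentric subannulus `A' = A(x;r',R')`
of width `w_{A'} ≥ min{w_A, w_A^{1/9}}` such that either (i) `w_{A'}(K i) ≤ w_{A'}^{1/3}`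
for all `i` with at most one exception, or (ii) two of the sets `K i` intersect
both boundary spheres of `A'`. -/
theorem stmt3 {X : Type*} [MetricSpace X] {I : Type*} (K : I → Set X)
    (hK : ∀ i, IsCompact (K i) ∧ IsConnected (K i))
    (x : X) (r R : ℝ) (hr : 0 < r) (hrR : r < R)
    (hext : ∃ y : X, R < dist x y) :
    ∃ r' R' : ℝ, r ≤ r' ∧ r' < R' ∧ R' ≤ R ∧
      min (Real.log (R / r)) (Real.log (R / r) ^ (1 / 9 : ℝ)) ≤ Real.log (R' / r') ∧
      ((∃ J : Set I, J.Subsingleton ∧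
          ∀ i ∉ J, relWidth x r' R' (K i) ≤ Real.log (R' / r') ^ (1 / 3 : ℝ)) ∨
       (∃ i₁ i₂ : I, i₁ ≠ i₂ ∧
          (K i₁ ∩ sphere x r').Nonempty ∧ (K i₁ ∩ sphere x R').Nonempty ∧
          (K i₂ ∩ sphere x r').Nonempty ∧ (K i₂ ∩ sphere x R').Nonempty)) := by
  have hW : 0 < Real.log (R / r) := Real.log_pos ((one_lt_div hr).2 hrR)
  by_cases hW1 : Real.log (R / r) ≤ 1
  · refine ⟨r, R, le_rfl, hrR, le_rfl, min_le_left _ _, Or.inl ⟨∅, by simp, ?_⟩⟩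
    intro i _
    have h3 : Real.log (R / r) ≤ Real.log (R / r) ^ (1 / 3 : ℝ) := by
      simpa using Real.rpow_le_rpow_of_exponent_ge hW hW1 (by norm_num : (1 / 3 : ℝ) ≤ 1)
    by_cases hp : 0 < relWidth x r R (K i)
    · obtain ⟨y, hy, z, hz, h1, h2, h4, heq⟩ := relWidth_attained x r R hr (K i) (hK i).1 hp
      rw [heq]
      refine le_trans (Real.log_le_log ?_ ?_) h3
      · exact div_pos (by linarith) (by linarith)
      · exact div_le_div₀ (by linarith) h4 hr h1
    · linarith
  push Not at hW1
  have hmin : ∀ w : ℝ, Real.log (R / r) ^ (1 / 9 : ℝ) ≤ w →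
      min (Real.log (R / r)) (Real.log (R / r) ^ (1 / 9 : ℝ)) ≤ w :=
    fun w h => (min_le_right _ _).trans h
  by_cases hA : ∀ i, relWidth x r R (K i) ≤ Real.log (R / r) ^ (1 / 3 : ℝ)
  · exact ⟨r, R, le_rfl, hrR, le_rfl, min_le_left _ _, Or.inl ⟨∅, by simp, fun i _ => hA i⟩⟩
  push Not at hA
  obtain ⟨i, hi⟩ := hA
  obtain ⟨y, hy, z, hz, h1, h2, h3, heq⟩ := relWidth_attained x r R hr (K i) (hK i).1
    ((Real.rpow_pos_of_pos hW _).trans hi)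
  rw [heq] at hi
  have h19 : Real.log (R / r) ^ (1 / 9 : ℝ) ≤ Real.log (R / r) ^ (1 / 3 : ℝ) :=
    Real.rpow_le_rpow_of_exponent_le hW1.le (by norm_num)
  have hy0 : 0 < dist x y := by linarith
  by_cases hB : ∀ j, j ≠ i → relWidth x (dist x y) (dist x z) (K j) ≤
      Real.log (dist x z / dist x y) ^ (1 / 3 : ℝ)
  · exact ⟨dist x y, dist x z, h1, h2, h3, hmin _ (h19.trans hi.le),
      Or.inl ⟨{i}, by simp, fun j hj => hB j hj⟩⟩
  push Not at hB
  obtain ⟨j, hji, hj⟩ := hB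
  have hL : 0 < Real.log (dist x z / dist x y) := (Real.rpow_pos_of_pos hW _).trans hi
  obtain ⟨y', hy', z', hz', h1', h2', h3', heq'⟩ :=
    relWidth_attained x (dist x y) (dist x z) hy0 (K j) (hK j).1
    ((Real.rpow_pos_of_pos hL _).trans hj)
  rw [heq'] at hj
  refine ⟨dist x y', dist x z', h1.trans h1', h2', h3'.trans h3, hmin _ ?_,
    Or.inr ⟨i, j, hji.symm, ?_, ?_, ?_, ?_⟩⟩
  · refine le_trans ?_ hj.le
    have := Real.rpow_le_rpow (Real.rpow_pos_of_pos hW _).le hi.le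
      (by norm_num : (0 : ℝ) ≤ 1 / 3)
    rw [← Real.rpow_mul hW.le] at this
    norm_num at this ⊢
    exact this
  · exact meets_sphere x _ (hK i).2 hy hz h1' (by linarith)
  · exact meets_sphere x _ (hK i).2 hy hz (by linarith) h3'
  · exact meets_sphere x _ (hK j).2 hy' hz' le_rfl h2'.le
  · exact meets_sphere x _ (hK j).2 hy' hz' h2'.le le_rfl
end
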